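/- Let t ≥ 1 be an integer, let q ∈ ℂ with 0 < |q| < 1, and let x ∈ ℂ with x ≠ 0 and x·q^n ≠ 1 for every nonzero integer n. Then q^{-t} Σ_{1 ≤ k_1 ≤ … ≤ k_t} (xq;q)_{k_t-1} (q/x;q)_{k_t-1} q^{k_t} Π_{i=1}^{t-1} q^{k_i^2} [k_{i+1} + k_i - i + 2Σ_{j=1}^{i-1} k_j choose k_{i+1} - k_i]_q = -q^{-t/2 - 1/8} · ((xq;q)_∞ (q/x;q)_∞ / ((q;q)_∞)^2) · ( Σ_{r,s ≥ 0, r ≢ s (mod 2)} - Σ_{r,s < 0, r ≢ s (mod 2)} ) (-1)^{(r-s-1)/2} q^{r^2/8 + (4t+3)rs/4 + s^2/8 + (2+t)r/2 + t s/2} / (1 - x q^{(r+s+1)/2}), where each of the series converges absolutely. Note that for integers r ≢ s (mod 2), the quantities (r-s-1)/2 and (r+s+1)/2 are integers, and the total exponent of q in each term (including the prefactor exponent -t/2 - 1/8) is an integer. -/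

import Mathlib

open Finset

/-- The finite q-Pochhammer symbol `(a;q)_n`. -/
noncomputable def qPoch (q a : ℂ) (n : ℕ) : ℂ := ∏ j ∈ Finset.range n, (1 - a * q ^ j)

/-- The infinite q-Pochhammer symbol `(a;q)_∞`. -/
noncomputable def qPochInf (q a : ℂ) : ℂ := ∏' j : ℕ, (1 - a * q ^ j)

/-- The Gaussian binomial coefficient `[n choose k]_q`, zero outside `0 ≤ k ≤ n`. -/
noncomputable def qBinom (q : ℂ) (n k : ℤ) : ℂ :=
  if 0 ≤ k ∧ k ≤ n then
    ∏ j ∈ Finset.range k.toNat, (1 - q ^ (n - k + (j : ℤ) + 1)) / (1 - q ^ ((j : ℤ) + 1))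
  else 0

/-- The product `Π_{i=1}^{t-1} q^{k_i^2} [k_{i+1}+k_i-i+2Σ_{j<i}k_j choose k_{i+1}-k_i]_q`
appearing in the generalized U-function `U_t` (tuple of length `t+1`, i.e. the paper's
`t` equals `t+1`). -/
noncomputable def UtProd (q : ℂ) (t : ℕ) (K : Fin (t+1) → ℕ) : ℂ :=
  ∏ i : Fin t, (q ^ (K i.castSucc ^ 2) *
    qBinom q ((K i.succ : ℤ) + (K i.castSucc : ℤ) - ((i : ℕ) + 1)
        + 2 * ∑ j ∈ Finset.univ.filter (fun j : Fin (t+1) => (j : ℕ) < (i : ℕ)), (K j : ℤ))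
      ((K i.succ : ℤ) - (K i.castSucc : ℤ)))

/-- The summand of the multisum defining `U_t(-x;q)`, indexed by weakly increasing
tuples `1 ≤ k_1 ≤ … ≤ k_t`. -/
noncomputable def UtTerm (q x : ℂ) (t : ℕ) (K : Fin (t+1) → ℕ) : ℂ :=
  qPoch q (x * q) (K (Fin.last t) - 1) * qPoch q (q / x) (K (Fin.last t) - 1) *
    q ^ (K (Fin.last t)) * UtProd q t K

/-- The Hecke-type summand: `(-1)^{(r-s-1)/2} q^{E} / (1 - x q^{(r+s+1)/2})` where the
integer exponent `E = r²/8 + (4t+3)rs/4 + s²/8 + (2+t)r/2 + ts/2 - t/2 - 1/8` (the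
prefactor exponent `-t/2 - 1/8` has been absorbed, making the total exponent of `q`
an integer, as noted in the statement); here the paper's `t` is `T`. -/
noncomputable def heckeTerm (q x : ℂ) (T : ℤ) (p : ℤ × ℤ) : ℂ :=
  (-1 : ℂ) ^ ((p.1 - p.2 - 1) / 2) *
    q ^ ((p.1 ^ 2 + p.2 ^ 2 + 2 * (4 * T + 3) * p.1 * p.2
          + 4 * (2 + T) * p.1 + 4 * T * p.2 - 4 * T - 1) / 8) /
    (1 - x * q ^ ((p.1 + p.2 + 1) / 2))

/-! The Gaussian binomial coefficients in the multisum are the kernel of a Bailey chain. Write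
`α₀, α₁, …` for the unit Bailey pair relative to `q`, moved backwards along the chain. Summing over
the last entry of the tuple moves it forwards by one step, because the convolution with
`(a; q)_k / (q; q)_k`, `a` a power of `q`, turns `aⁱ` times a convolution with `1 / (q; q)_l` into
another such convolution, by the `q`-binomial theorem. The first entry changes the base of the pair
from `q` to `1`, which replaces the `α`'s by their partial sums. The sum over the tuples with last
entry `N` is thus the `N`-th `β` of an explicit Bailey pair relative to `1`.

The sum of these `β`'s against `(xq; q)_{N-1} (q/x; q)_{N-1} q^N` telescopes, and its limit, taken
under the summation sign, is a single series in the `α`'s with denominators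
`(1 - x q^n) (1 - q^n / x)`. Partial fractions split it into the parts of the Hecke-type sum with
`(r + s + 1) / 2 = n` and `(r + s + 1) / 2 = -n`; the partial sums of the `α`'s are the sums over
the remaining index `(r - s - 1) / 2`. -/

section QPochhammer

variable {q : ℂ}

theorem qPoch_zero (q a : ℂ) : qPoch q a 0 = 1 := prod_range_zero _

theorem qPoch_succ (q a : ℂ) (n : ℕ) : qPoch q a (n + 1) = qPoch q a n * (1 - a * q ^ n) :=
  prod_range_succ _ n

theorem qPoch_self_succ (q : ℂ) (n : ℕ) :
    qPoch q q (n + 1) = qPoch q q n * (1 - q ^ (n + 1)) := by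
  rw [qPoch_succ, pow_succ']

theorem one_sub_pow_succ_ne_zero (hq : ¬IsOfFinOrder q) (n : ℕ) : 1 - q ^ (n + 1) ≠ 0 :=
  fun h ↦ hq (isOfFinOrder_iff_pow_eq_one.2 ⟨n + 1, n.succ_pos, (sub_eq_zero.1 h).symm⟩)

theorem qPoch_self_ne_zero (hq : ¬IsOfFinOrder q) (n : ℕ) : qPoch q q n ≠ 0 :=
  prod_ne_zero_iff.2 fun j _ ↦ by
    rw [← pow_succ']
    exact one_sub_pow_succ_ne_zero hq j

theorem qBinom_add_natCast (q : ℂ) (a m : ℕ) :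
    qBinom q ((a : ℤ) + m) a = qPoch q (q ^ (m + 1)) a / qPoch q q a := by
  rw [qBinom, if_pos (by omega), Int.toNat_natCast, prod_div_distrib]
  congr 1 <;> refine prod_congr rfl fun j _ ↦ ?_
  · rw [← pow_add, ← zpow_natCast]
    congr 2
    push_cast
    ring
  · rw [← pow_succ']
    norm_cast

theorem qBinom_eq_zero_of_neg (q : ℂ) (n : ℤ) {k : ℤ} (hk : k < 0) : qBinom q n k = 0 :=
  if_neg fun h ↦ h.1.not_gt hk

end QPochhammer

section Antidiagonal

variable {q : ℂ}

theorem sum_antidiagonal_sum_antidiagonal_fst {R : Type*} [AddCommMonoid R]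
    (f : ℕ → ℕ → ℕ → R) (n : ℕ) :
    ∑ p ∈ antidiagonal n, ∑ r ∈ antidiagonal p.1, f r.1 r.2 p.2 =
      ∑ p ∈ antidiagonal n, ∑ r ∈ antidiagonal p.2, f p.1 r.1 r.2 := by
  simp only [sum_sigma']
  refine sum_nbij' (fun s ↦ ⟨(s.2.1, s.2.2 + s.1.2), (s.2.2, s.1.2)⟩)
    (fun s ↦ ⟨(s.1.1 + s.2.1, s.2.2), (s.1.1, s.2.1)⟩) ?_ ?_ ?_ ?_ ?_ <;>
    simp only [mem_sigma, HasAntidiagonal.mem_antidiagonal] <;> grind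

theorem one_sub_pow_mul_sum_antidiagonal (hq : ¬IsOfFinOrder q) (F : ℕ → ℕ → ℂ) (n : ℕ) :
    (1 - q ^ (n + 1)) * ∑ p ∈ antidiagonal (n + 1),
        F p.1 p.2 / (qPoch q q p.1 * qPoch q q p.2) =
      ∑ p ∈ antidiagonal n,
        (F (p.1 + 1) p.2 + q ^ p.1 * F p.1 (p.2 + 1)) / (qPoch q q p.1 * qPoch q q p.2) := by
  let G : ℕ × ℕ → ℂ := fun p ↦ F p.1 p.2 / (qPoch q q p.1 * qPoch q q p.2)
  have split_factor : ∀ p ∈ antidiagonal (n + 1), (1 - q ^ (n + 1)) * G p =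
      (1 - q ^ p.1) * G p + q ^ p.1 * (1 - q ^ p.2) * G p := fun p hp ↦ by
    rw [← mem_antidiagonal.1 hp, pow_add]
    ring
  rw [mul_sum, sum_congr rfl split_factor, sum_add_distrib, Finset.Nat.sum_antidiagonal_succ,
    Finset.Nat.sum_antidiagonal_succ']
  simp only [pow_zero, sub_self, mul_zero, zero_mul, zero_add, G]
  rw [← sum_add_distrib]
  refine sum_congr rfl fun p _ ↦ ?_
  have h₁ := one_sub_pow_succ_ne_zero hq p.1
  have h₂ := one_sub_pow_succ_ne_zero hq p.2
  have h₃ := qPoch_self_ne_zero hq p.1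
  have h₄ := qPoch_self_ne_zero hq p.2
  rw [qPoch_self_succ, qPoch_self_succ]
  field_simp

theorem sum_antidiagonal_qVandermonde (hq : ¬IsOfFinOrder q) (n c : ℕ) :
    ∑ p ∈ antidiagonal n,
        q ^ (p.1 ^ 2 + c * p.1) / qPoch q q (p.1 + c) / (qPoch q q p.1 * qPoch q q p.2) =
      1 / (qPoch q q n * qPoch q q (n + c)) := by
  induction n generalizing c with
  | zero => simp [qPoch_zero]
  | succ n ih =>
    rw [← mul_right_inj' (one_sub_pow_succ_ne_zero hq n), one_sub_pow_mul_sum_antidiagonal hq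
      fun i _ ↦ q ^ (i ^ 2 + c * i) / qPoch q q (i + c)]
    have merge : ∀ i : ℕ, q ^ ((i + 1) ^ 2 + c * (i + 1)) / qPoch q q (i + 1 + c) +
        q ^ i * (q ^ (i ^ 2 + c * i) / qPoch q q (i + c)) =
        q ^ (i ^ 2 + (c + 1) * i) / qPoch q q (i + (c + 1)) := fun i ↦ by
      have h₁ := one_sub_pow_succ_ne_zero hq (i + c)
      have h₂ := qPoch_self_ne_zero hq (i + c)
      rw [show i + 1 + c = i + c + 1 by ring, ← add_assoc i c 1, qPoch_self_succ]
      field_simp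
      ring
    simp only [merge, ih]
    have h₁ := one_sub_pow_succ_ne_zero hq n
    rw [qPoch_self_succ q n, show n + 1 + c = n + (c + 1) by ring]
    field_simp

theorem sum_antidiagonal_qPoch_mul_pow (hq : ¬IsOfFinOrder q) (a : ℂ) (n : ℕ) :
    ∑ p ∈ antidiagonal n, qPoch q a p.1 * a ^ p.2 / (qPoch q q p.1 * qPoch q q p.2) =
      1 / qPoch q q n := by
  induction n with
  | zero => simp [qPoch_zero]
  | succ n ih =>
    have merge : ∀ i j : ℕ, qPoch q a (i + 1) * a ^ j + q ^ i * (qPoch q a i * a ^ (j + 1)) =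
        qPoch q a i * a ^ j := fun i j ↦ by
      rw [qPoch_succ]
      ring
    rw [← mul_right_inj' (one_sub_pow_succ_ne_zero hq n),
      one_sub_pow_mul_sum_antidiagonal hq fun i j ↦ qPoch q a i * a ^ j]
    simp only [merge]
    have h₁ := one_sub_pow_succ_ne_zero hq n
    rw [ih, qPoch_self_succ]
    field_simp

/-- The convolution of `c` with `1 / (q;q)_l`, i.e. the coefficients of the product of the
generating function of `c` with `∑ zˡ / (q;q)_l`. -/
noncomputable def qConv (q : ℂ) (c : ℕ → ℂ) (n : ℕ) : ℂ :=
  ∑ p ∈ antidiagonal n, c p.1 / qPoch q q p.2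

theorem sum_antidiagonal_qPoch_mul_qConv (hq : ¬IsOfFinOrder q) (a : ℂ) (c : ℕ → ℂ) (n : ℕ) :
    ∑ p ∈ antidiagonal n, qPoch q a p.1 / qPoch q q p.1 * (a ^ p.2 * qConv q c p.2) =
      qConv q (fun i ↦ a ^ i * c i) n := by
  let E : PowerSeries ℂ := .mk fun l ↦ 1 / qPoch q q l
  let P : PowerSeries ℂ := .mk fun i ↦ qPoch q a i / qPoch q q i
  have coeff_mul_E (f : ℕ → ℂ) (m : ℕ) : (PowerSeries.mk f * E).coeff m = qConv q f m := by
    simp only [PowerSeries.coeff_mul, PowerSeries.coeff_mk, mul_one_div, E, qConv]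
  have P_mul_E : P * PowerSeries.rescale a E = E := by
    ext m
    simp only [PowerSeries.coeff_mul, PowerSeries.coeff_rescale, PowerSeries.coeff_mk, P, E,
      ← sum_antidiagonal_qPoch_mul_pow hq a m]
    refine sum_congr rfl fun p _ ↦ ?_
    rw [mul_one_div, div_mul_div_comm]
  calc _ = (P * PowerSeries.rescale a (PowerSeries.mk c * E)).coeff n := by
        simp only [PowerSeries.coeff_mul _ P, PowerSeries.coeff_rescale, coeff_mul_E,
          PowerSeries.coeff_mk, P]
    _ = (PowerSeries.mk (fun i ↦ a ^ i * c i) * E).coeff n := by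
        rw [map_mul (PowerSeries.rescale a), mul_left_comm, P_mul_E, PowerSeries.rescale_mk]
    _ = _ := coeff_mul_E _ n

end Antidiagonal

section Bailey

variable {q : ℂ}

/-- The sequence `β` of the Bailey pair relative to `q ^ c` whose first entry is `α`, with the
constant factor `(q;q)_c` of `(q ^ (c + 1);q)_{N + n}` left out. -/
noncomputable def baileySum (q : ℂ) (c : ℕ) (α : ℕ → ℂ) (N : ℕ) : ℂ :=
  ∑ n ∈ range (N + 1), α n / (qPoch q q (N - n) * qPoch q q (N + n + c))

theorem baileySum_eq_sum_antidiagonal (q : ℂ) (c : ℕ) (α : ℕ → ℂ) (N : ℕ) :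
    baileySum q c α N =
      ∑ p ∈ antidiagonal N, α p.1 / (qPoch q q p.2 * qPoch q q (2 * p.1 + p.2 + c)) := by
  rw [Finset.Nat.sum_antidiagonal_eq_sum_range_succ_mk, baileySum]
  refine sum_congr rfl fun n hn ↦ ?_
  have : N + n = 2 * n + (N - n) := by have := mem_range_succ_iff.1 hn; omega
  rw [this]

theorem qConv_pow_mul_baileySum (hq : ¬IsOfFinOrder q) (c : ℕ) (α : ℕ → ℂ) (N : ℕ) :
    qConv q (fun k ↦ q ^ (k ^ 2 + c * k) * baileySum q c α k) N =
      baileySum q c (fun n ↦ q ^ (n ^ 2 + c * n) * α n) N := by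
  have regroup : qConv q (fun k ↦ q ^ (k ^ 2 + c * k) * baileySum q c α k) N =
      ∑ p ∈ antidiagonal N, ∑ r ∈ antidiagonal p.2, q ^ ((p.1 + r.1) ^ 2 + c * (p.1 + r.1)) *
        (α p.1 / (qPoch q q r.1 * qPoch q q (2 * p.1 + r.1 + c))) / qPoch q q r.2 := by
    rw [← sum_antidiagonal_sum_antidiagonal_fst fun n j l ↦ q ^ ((n + j) ^ 2 + c * (n + j)) *
      (α n / (qPoch q q j * qPoch q q (2 * n + j + c))) / qPoch q q l, qConv]
    refine sum_congr rfl fun p _ ↦ ?_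
    rw [baileySum_eq_sum_antidiagonal, mul_sum, sum_div]
    refine sum_congr rfl fun r hr ↦ ?_
    rw [mem_antidiagonal.1 hr]
  rw [regroup, baileySum_eq_sum_antidiagonal]
  refine sum_congr rfl fun p _ ↦ ?_
  have vandermonde := sum_antidiagonal_qVandermonde hq p.2 (2 * p.1 + c)
  rw [show 2 * p.1 + p.2 + c = p.2 + (2 * p.1 + c) by ring, div_eq_mul_one_div, ← vandermonde,
    mul_sum]
  refine sum_congr rfl fun r _ ↦ ?_
  rw [show 2 * p.1 + r.1 + c = r.1 + (2 * p.1 + c) by ring]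
  have exponent : q ^ ((p.1 + r.1) ^ 2 + c * (p.1 + r.1)) =
      q ^ (p.1 ^ 2 + c * p.1) * q ^ (r.1 ^ 2 + (2 * p.1 + c) * r.1) := by ring
  rw [exponent]
  ring

-- The number of terms and the index `J + d` of the kernel are decoupled to make this inductive.
theorem sum_range_pow_mul_baileySum_kernel (hq : ¬IsOfFinOrder q) (g : ℕ → ℂ) (J d : ℕ) :
    ∑ n ∈ range (J + 1), (1 - q ^ (2 * n)) * q ^ (n ^ 2 - n) * (∑ m ∈ range n, g m) /
        (qPoch q q (J + d + 1 - n) * qPoch q q (J + d + 1 + n)) =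
      ∑ m ∈ range J, q ^ (m ^ 2 + m) * g m /
          (qPoch q q (J + d - m) * qPoch q q (J + d + m + 1)) -
        q ^ (J ^ 2 + J) * (∑ m ∈ range J, g m) /
          (qPoch q q d * qPoch q q (J + d + J + 1)) := by
  induction J generalizing d with
  | zero => simp
  | succ J ih =>
    have h := ih (d + 1)
    rw [show J + (d + 1) = J + 1 + d by ring] at h
    have h₁ := one_sub_pow_succ_ne_zero hq d
    have h₂ := one_sub_pow_succ_ne_zero hq (J + 1 + d + J + 1)
    have h₃ := qPoch_self_ne_zero hq d
    have h₄ := qPoch_self_ne_zero hq (J + 1 + d + J + 1)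
    rw [sum_range_succ, h, sum_range_succ g J, sum_range_succ _ J,
      show J + 1 + d + 1 - (J + 1) = d + 1 by omega, show J + 1 + d - J = d + 1 by omega,
      show J + 1 + d + 1 + (J + 1) = J + 1 + d + J + 1 + 1 by ring,
      show J + 1 + d + (J + 1) + 1 = J + 1 + d + J + 1 + 1 by ring,
      show (J + 1) ^ 2 - (J + 1) = J ^ 2 + J by rw [Nat.sub_eq_iff_eq_add (by nlinarith)]; ring,
      qPoch_self_succ q (J + 1 + d + J + 1), qPoch_self_succ q d]
    field_simp
    ring

theorem baileySum_one_eq_baileySum_zero_succ (hq : ¬IsOfFinOrder q) (g : ℕ → ℂ) (N : ℕ) :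
    baileySum q 1 (fun m ↦ q ^ (m ^ 2 + m) * g m) N =
      baileySum q 0 (fun n ↦ (1 - q ^ (2 * n)) * q ^ (n ^ 2 - n) * ∑ m ∈ range n, g m)
        (N + 1) := by
  have h := sum_range_pow_mul_baileySum_kernel hq g N 0
  have h₁ := one_sub_pow_succ_ne_zero hq (N + N + 1)
  have h₂ := qPoch_self_ne_zero hq (N + N + 1)
  rw [baileySum, baileySum, sum_range_succ _ (N + 1), sum_range_succ _ N]
  simp only [add_zero, tsub_self, qPoch_zero, one_mul] at h ⊢
  rw [h, sum_range_succ g, show N + 1 + (N + 1) = N + N + 1 + 1 by ring,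
    qPoch_self_succ q (N + N + 1),
    show (N + 1) ^ 2 - (N + 1) = N ^ 2 + N by rw [Nat.sub_eq_iff_eq_add (by nlinarith)]; ring]
  field_simp
  ring

/-- The entries `α` of the Bailey pair relative to `q` that is obtained from the unit Bailey pair
by going `s` steps backwards along the Bailey chain. -/
noncomputable def unitAlpha (q : ℂ) (s m : ℕ) : ℂ :=
  (-1) ^ m * (1 - q ^ (2 * m + 1)) * q ^ ((m.choose 2 : ℤ) - s * (m * (m + 1)))

theorem unitAlpha_zero (q : ℂ) (m : ℕ) :
    unitAlpha q 0 m = (-1) ^ m * (1 - q ^ (2 * m + 1)) * q ^ m.choose 2 := by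
  simp [unitAlpha]

theorem pow_mul_unitAlpha_succ (hq : q ≠ 0) (s m : ℕ) :
    q ^ (m ^ 2 + m) * unitAlpha q (s + 1) m = unitAlpha q s m := by
  rw [unitAlpha, unitAlpha, mul_left_comm, ← zpow_natCast q (m ^ 2 + m), ← zpow_add₀ hq]
  congr 2
  push_cast
  ring

theorem qConv_pow_mul_baileySum_unitAlpha_succ (hq₀ : q ≠ 0) (hq : ¬IsOfFinOrder q) (s N : ℕ) :
    qConv q (fun i ↦ q ^ (i ^ 2 + i) * baileySum q 1 (unitAlpha q (s + 1)) i) N =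
      baileySum q 1 (unitAlpha q s) N := by
  simpa only [one_mul, pow_mul_unitAlpha_succ hq₀] using
    qConv_pow_mul_baileySum hq 1 (unitAlpha q (s + 1)) N

theorem one_sub_pow_mul_sum_range_unitAlpha (hq : ¬IsOfFinOrder q) (J d : ℕ) :
    (1 - q ^ (J + d)) * ∑ m ∈ range J, unitAlpha q 0 m /
        (qPoch q q (J + d - m) * qPoch q q (J + d + m + 1)) =
      -((-1) ^ J * q ^ J.choose 2 * (1 - q ^ J) /
        (qPoch q q d * qPoch q q (J + d + J))) := by
  induction J generalizing d with
  | zero => simp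
  | succ J ih =>
    have h := ih (d + 1)
    rw [show J + (d + 1) = J + 1 + d by ring] at h
    have h₁ := one_sub_pow_succ_ne_zero hq d
    have h₂ := one_sub_pow_succ_ne_zero hq (J + 1 + d + J)
    have h₃ := qPoch_self_ne_zero hq d
    have h₄ := qPoch_self_ne_zero hq (J + 1 + d + J)
    rw [sum_range_succ, mul_add, h, show J + 1 + d - J = d + 1 by omega, ← add_assoc _ J 1,
      qPoch_self_succ q (J + 1 + d + J), qPoch_self_succ q d, unitAlpha_zero,
      Nat.choose_succ_succ' J 1, Nat.choose_one_right]
    field_simp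
    ring

theorem baileySum_unitAlpha_zero (hq : ¬IsOfFinOrder q) (N : ℕ) :
    baileySum q 1 (unitAlpha q 0) N = if N = 0 then 1 else 0 := by
  rcases N with _ | N
  · have := one_sub_pow_succ_ne_zero hq 0
    simp_all [baileySum, unitAlpha_zero, qPoch_self_succ, qPoch_zero]
  · have h := one_sub_pow_mul_sum_range_unitAlpha hq (N + 1) 0
    have h₁ := one_sub_pow_succ_ne_zero hq (N + 1 + (N + 1))
    have h₂ := qPoch_self_ne_zero hq (N + 1 + (N + 1))
    rw [if_neg N.succ_ne_zero, ← mul_right_inj' (one_sub_pow_succ_ne_zero hq N), mul_zero,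
      baileySum, sum_range_succ, mul_add]
    simp only [add_zero, tsub_self, qPoch_zero, one_mul] at h ⊢
    rw [h, qPoch_self_succ, unitAlpha_zero]
    field_simp
    ring

theorem mul_baileySum_succ {x : ℂ} (hq : ¬IsOfFinOrder q) (hx : x ≠ 0)
    (hx₁ : ∀ n : ℕ, x * q ^ (n + 1) ≠ 1) (hx₂ : ∀ n : ℕ, q ^ (n + 1) / x ≠ 1)
    {α : ℕ → ℂ} (hα : α 0 = 0) (N : ℕ) :
    (1 - x * q ^ (N + 1)) * (1 - q ^ (N + 1) / x) *
        baileySum q 0 (fun n ↦ α n * q ^ n / ((1 - x * q ^ n) * (1 - q ^ n / x))) (N + 1) =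
      baileySum q 0 (fun n ↦ α n * q ^ n / ((1 - x * q ^ n) * (1 - q ^ n / x))) N +
        q ^ (N + 1) * baileySum q 0 α (N + 1) := by
  have h₁ (n : ℕ) : 1 - x * q ^ (n + 1) ≠ 0 := sub_ne_zero.2 (hx₁ n).symm
  have h₂ (n : ℕ) : x - q ^ (n + 1) ≠ 0 := fun h ↦
    hx₂ n ((div_eq_one_iff_eq hx).2 (sub_eq_zero.1 h).symm)
  simp only [baileySum, add_zero]
  rw [sum_range_succ _ (N + 1), sum_range_succ _ (N + 1), mul_add, mul_add (q ^ (N + 1))]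
  refine (congrArg₂ (· + ·) ?_ ?_).trans (add_assoc _ _ _)
  · rw [mul_sum, mul_sum, ← sum_add_distrib]
    refine sum_congr rfl fun n hn ↦ ?_
    rcases n with _ | n
    · simp [hα]
    obtain ⟨d, rfl⟩ := Nat.exists_eq_add_of_le (mem_range_succ_iff.1 hn)
    have h₃ := one_sub_pow_succ_ne_zero hq d
    have h₄ := one_sub_pow_succ_ne_zero hq (n + 1 + d + (n + 1))
    have h₅ := qPoch_self_ne_zero hq d
    have h₆ := qPoch_self_ne_zero hq (n + 1 + d + (n + 1))
    have h₇ := h₁ n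
    have h₈ := h₂ n
    rw [show n + 1 + d + 1 - (n + 1) = d + 1 by omega, Nat.add_sub_cancel_left,
      show n + 1 + d + 1 + (n + 1) = n + 1 + d + (n + 1) + 1 by ring, qPoch_self_succ q d,
      qPoch_self_succ q (n + 1 + d + (n + 1))]
    field_simp
    ring
  · have h₇ := h₁ N
    have h₈ := h₂ N
    field_simp

theorem sum_range_qPoch_mul_baileySum {x : ℂ} (hq : ¬IsOfFinOrder q) (hx : x ≠ 0)
    (hx₁ : ∀ n : ℕ, x * q ^ (n + 1) ≠ 1) (hx₂ : ∀ n : ℕ, q ^ (n + 1) / x ≠ 1)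
    {α : ℕ → ℂ} (hα : α 0 = 0) (J : ℕ) :
    ∑ N ∈ range J, qPoch q (x * q) N * qPoch q (q / x) N * q ^ (N + 1) *
        baileySum q 0 α (N + 1) =
      qPoch q (x * q) J * qPoch q (q / x) J *
        baileySum q 0 (fun n ↦ α n * q ^ n / ((1 - x * q ^ n) * (1 - q ^ n / x))) J := by
  induction J with
  | zero => simp [baileySum, hα]
  | succ J ih =>
    rw [sum_range_succ, ih, qPoch_succ, qPoch_succ, mul_assoc x, ← pow_succ', div_mul_eq_mul_div,
      ← pow_succ']
    linear_combination -(qPoch q (x * q) J * qPoch q (q / x) J) *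
      mul_baileySum_succ hq hx hx₁ hx₂ hα J

end Bailey

section ChainSum

variable {q : ℂ}

/-- The shift `1 + (2k₁ - 1) + ⋯ + (2kₜ - 1)` which the entries before the last one `kₜ₊₁` of a
tuple contribute to the top of the next Gaussian binomial coefficient. -/
def chainShift (t : ℕ) (K : Fin (t + 1) → ℕ) : ℕ :=
  1 + ∑ j : Fin t, (2 * K j.castSucc - 1)

theorem chainShift_zero (K : Fin 1 → ℕ) : chainShift 0 K = 1 := rfl

theorem chainShift_snoc (t : ℕ) (K : Fin (t + 1) → ℕ) (k : ℕ) :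
    chainShift (t + 1) (Fin.snoc (α := fun _ ↦ ℕ) K k) =
      chainShift t K + (2 * K (Fin.last t) - 1) := by
  simp only [chainShift, Fin.sum_univ_castSucc, Fin.snoc_castSucc, add_assoc]

theorem cast_chainShift {t : ℕ} {K : Fin (t + 1) → ℕ} (hK : ∀ i, 1 ≤ K i) :
    (chainShift t K : ℤ) = 1 + 2 * ∑ j : Fin t, (K j.castSucc : ℤ) - t := by
  have cast_sub (j : Fin t) : ((2 * K j.castSucc - 1 : ℕ) : ℤ) = 2 * K j.castSucc - 1 := by
    have := hK j.castSucc
    omega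
  rw [chainShift, Nat.cast_add, Nat.cast_sum, sum_congr rfl fun j _ ↦ cast_sub j, sum_sub_distrib,
    ← mul_sum, sum_const, card_univ, Fintype.card_fin]
  simp only [Nat.cast_one, nsmul_eq_mul, mul_one]
  ring

theorem UtProd_zero (q : ℂ) (K : Fin 1 → ℕ) : UtProd q 0 K = 1 := Fin.prod_univ_zero _

theorem UtProd_snoc (q : ℂ) (t : ℕ) {K : Fin (t + 1) → ℕ} (k : ℕ) (hK : ∀ i, 1 ≤ K i) :
    UtProd q (t + 1) (Fin.snoc (α := fun _ ↦ ℕ) K k) =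
      UtProd q t K * (q ^ (K (Fin.last t) ^ 2) *
        qBinom q ((k : ℤ) + K (Fin.last t) - 2 + chainShift t K) (k - K (Fin.last t))) := by
  rw [UtProd, Fin.prod_univ_castSucc]
  congr 1
  · refine prod_congr rfl fun i _ ↦ ?_
    have : ¬t + 1 < (i : ℕ) := by omega
    rw [← Fin.castSucc_succ, Fin.snoc_castSucc, Fin.snoc_castSucc, sum_filter,
      sum_filter, Fin.sum_univ_castSucc]
    simp only [Fin.snoc_castSucc, Fin.val_castSucc, Fin.val_last, this, if_false, add_zero]
  · rw [Fin.succ_last, Fin.snoc_last, Fin.snoc_castSucc, cast_chainShift hK, sum_filter,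
      Fin.sum_univ_castSucc, Fin.sum_univ_castSucc]
    simp only [Fin.snoc_castSucc, Fin.val_castSucc, Fin.val_last, Fin.is_lt, if_true,
      lt_irrefl, if_false, add_zero, not_lt.2 t.le_succ]
    congr 2
    ring

theorem sum_piFinset_snoc {R : Type*} [AddCommMonoid R] {t : ℕ} (s : Finset ℕ)
    (f : (Fin (t + 1) → ℕ) → R) :
    ∑ K ∈ Fintype.piFinset (fun _ : Fin (t + 1) ↦ s), f K =
      ∑ K ∈ Fintype.piFinset (fun _ : Fin t ↦ s), ∑ k ∈ s,
        f (Fin.snoc (α := fun _ ↦ ℕ) K k) := by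
  rw [sum_comm, ← sum_product']
  refine (sum_equiv (Fin.snocEquiv fun _ ↦ ℕ) (fun p ↦ ?_) fun p _ ↦ rfl).symm
  rw [mem_product, Fin.mem_piFinset_iff_last_init, Fin.snocEquiv_apply, Fin.snoc_last]
  change _ ↔ p.1 ∈ s ∧ Fin.init (Fin.snoc (α := fun _ ↦ ℕ) p.2 p.1) ∈ Fintype.piFinset fun _ ↦ s
  rw [Fin.init_snoc]

/-- The sequence `φ` shifted by `κ` places and weighted by powers of `q ^ e`: the function of the
last entry `κ` of a tuple and of its `chainShift` that reproduces itself under summation over that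
last entry. -/
noncomputable def shiftWeight (q : ℂ) (φ : ℕ → ℂ) (N κ e : ℕ) : ℂ :=
  if κ ≤ N then (q ^ e) ^ (N - κ) * φ (N - κ) else 0

theorem shiftWeight_add_left (q : ℂ) (φ : ℕ → ℂ) (κ n e : ℕ) :
    shiftWeight q φ (κ + n) κ e = (q ^ e) ^ n * φ n := by
  rw [shiftWeight, if_pos (κ.le_add_right n), Nat.add_sub_cancel_left]

theorem shiftWeight_of_lt (q : ℂ) (φ : ℕ → ℂ) {N κ : ℕ} (h : N < κ) (e : ℕ) :
    shiftWeight q φ N κ e = 0 :=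
  if_neg h.not_ge

theorem qConv_add_left (q : ℂ) {c : ℕ → ℂ} {κ : ℕ} (hc : ∀ k < κ, c k = 0) (n : ℕ) :
    qConv q c (κ + n) = qConv q (fun i ↦ c (κ + i)) n := by
  simp only [qConv, Finset.Nat.sum_antidiagonal_eq_sum_range_succ_mk]
  rw [Nat.succ_eq_add_one, add_assoc, sum_range_add, sum_eq_zero, zero_add]
  · simp only [Nat.add_sub_add_left, Nat.succ_eq_add_one]
  · exact fun k hk ↦ by rw [hc k (mem_range.1 hk), zero_div]

theorem sum_Icc_eq_sum_antidiagonal {R : Type*} [AddCommMonoid R] {f : ℕ → R} {κ n M : ℕ}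
    (hκ : 1 ≤ κ) (hM : κ + n ≤ M) (hf : ∀ k < κ, f k = 0) (hf' : ∀ k, κ + n < k → f k = 0) :
    ∑ k ∈ Icc 1 M, f k = ∑ p ∈ antidiagonal n, f (κ + p.1) := by
  have support : ∑ k ∈ Ico κ (κ + (n + 1)), f k = ∑ k ∈ Icc 1 M, f k := by
    refine sum_subset (fun k hk ↦ ?_) fun k _ hk ↦ ?_ <;> rw [mem_Ico] at hk
    · rw [mem_Icc]
      omega
    · rcases lt_or_ge k κ with h | h
      · exact hf k h
      · exact hf' k (by omega)
  rw [← support, sum_Ico_eq_sum_range, Nat.add_sub_cancel_left,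
    Finset.Nat.sum_antidiagonal_eq_sum_range_succ_mk]

theorem sum_qBinom_mul_shiftWeight (hq : ¬IsOfFinOrder q) (ψ : ℕ → ℂ) {κ N M : ℕ} (e : ℕ)
    (hκ : 1 ≤ κ) (hN : N ≤ M) :
    ∑ k ∈ Icc 1 M, q ^ κ ^ 2 * qBinom q ((k : ℤ) + κ - 2 + e) (k - κ) *
        shiftWeight q (qConv q fun i ↦ q ^ (i ^ 2 + i) * ψ i) N k (e + (2 * κ - 1)) =
      qConv q (fun k ↦ q ^ k ^ 2 * shiftWeight q ψ k κ e) N := by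
  have qBinom_zero (k : ℕ) (hk : k < κ) : qBinom q ((k : ℤ) + κ - 2 + e) (k - κ) = 0 :=
    qBinom_eq_zero_of_neg q _ (by omega)
  have weight_zero (k : ℕ) (hk : k < κ) : q ^ k ^ 2 * shiftWeight q ψ k κ e = 0 := by
    rw [shiftWeight_of_lt q ψ hk, mul_zero]
  rcases lt_or_ge N κ with hNκ | hκN
  · rw [qConv, sum_eq_zero, sum_eq_zero]
    · intro p hp
      rw [weight_zero _ ((HasAntidiagonal.antidiagonal.fst_le hp).trans_lt hNκ), zero_div]
    · intro k _
      rcases lt_or_ge k κ with hk | hk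
      · rw [qBinom_zero k hk, mul_zero, zero_mul]
      · rw [shiftWeight_of_lt q _ (hNκ.trans_le hk), mul_zero]
  obtain ⟨n, rfl⟩ := Nat.exists_eq_add_of_le hκN
  rw [qConv_add_left q weight_zero, sum_Icc_eq_sum_antidiagonal hκ hN
    (fun k hk ↦ by rw [qBinom_zero k hk, mul_zero, zero_mul])
    fun k hk ↦ by rw [shiftWeight_of_lt q _ hk, mul_zero]]
  obtain ⟨κ, rfl⟩ := Nat.exists_eq_add_of_le' hκ
  rw [show e + (2 * (κ + 1) - 1) = e + 2 * κ + 1 by omega]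
  set φ := qConv q fun i ↦ q ^ (i ^ 2 + i) * ψ i with hφ
  set a := q ^ (e + 2 * κ + 1) with ha
  calc _ = q ^ (κ + 1) ^ 2 * ∑ p ∈ antidiagonal n,
        qPoch q a p.1 / qPoch q q p.1 * (a ^ p.2 * φ p.2) := by
        rw [mul_sum]
        refine sum_congr rfl fun p hp ↦ ?_
        rw [← HasAntidiagonal.mem_antidiagonal.1 hp, ← add_assoc, shiftWeight_add_left, ← ha,
          show ((κ + 1 + p.1 : ℕ) : ℤ) + (κ + 1 : ℕ) - 2 + e = p.1 + (e + 2 * κ : ℕ) by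
            push_cast; ring,
          show ((κ + 1 + p.1 : ℕ) : ℤ) - (κ + 1 : ℕ) = p.1 by push_cast; ring,
          qBinom_add_natCast, ← ha, mul_assoc]
    _ = _ := by
        rw [hφ, sum_antidiagonal_qPoch_mul_qConv hq, qConv, qConv, mul_sum]
        refine sum_congr rfl fun p _ ↦ ?_
        rw [shiftWeight_add_left]
        ring

/-- The multisum over all tuples with entries in `[1, M]`, whose summands are the products `UtProd`
weighted by `shiftWeight q φ N`. -/
noncomputable def chainSum (q : ℂ) (t M : ℕ) (φ : ℕ → ℂ) (N : ℕ) : ℂ :=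
  ∑ K ∈ Fintype.piFinset fun _ : Fin (t + 1) ↦ Icc 1 M,
    UtProd q t K * shiftWeight q φ N (K (Fin.last t)) (chainShift t K)

theorem chainSum_zero (hq : ¬IsOfFinOrder q) (ψ : ℕ → ℂ) {N M : ℕ} (hN : N ≤ M) :
    q * chainSum q 0 M (qConv q fun i ↦ q ^ (i ^ 2 + i) * ψ i) N =
      qConv q (fun k ↦ q ^ k ^ 2 * shiftWeight q ψ k 1 0) N := by
  rw [← sum_qBinom_mul_shiftWeight hq ψ 0 le_rfl hN, chainSum, sum_piFinset_snoc,
    Fintype.piFinset_of_isEmpty, univ_unique, sum_singleton, mul_sum]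
  refine sum_congr rfl fun k hk ↦ ?_
  obtain ⟨k, rfl⟩ := Nat.exists_eq_add_of_le' (mem_Icc.1 hk).1
  have qBinom_self :
      qBinom q (((k + 1 : ℕ) : ℤ) + (1 : ℕ) - 2 + (0 : ℕ)) ((k + 1 : ℕ) - (1 : ℕ)) = 1 := by
    have := qBinom_add_natCast q k 0
    rw [zero_add, pow_one, div_self (qPoch_self_ne_zero hq k)] at this
    rw [← this]
    congr 1 <;> push_cast <;> ring
  rw [qBinom_self, UtProd_zero, chainShift_zero, one_mul, one_pow, pow_one, mul_one]
  rfl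

theorem chainSum_succ (hq : ¬IsOfFinOrder q) (t : ℕ) (ψ : ℕ → ℂ) {N M : ℕ} (hN : N ≤ M) :
    chainSum q (t + 1) M (qConv q fun i ↦ q ^ (i ^ 2 + i) * ψ i) N =
      qConv q (fun k ↦ q ^ k ^ 2 * chainSum q t M ψ k) N := by
  have sum_last : ∀ K ∈ Fintype.piFinset fun _ : Fin (t + 1) ↦ Icc 1 M,
      ∑ k ∈ Icc 1 M, UtProd q (t + 1) (Fin.snoc (α := fun _ ↦ ℕ) K k) *
        shiftWeight q (qConv q fun i ↦ q ^ (i ^ 2 + i) * ψ i) N k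
          (chainShift t K + (2 * K (Fin.last t) - 1)) =
      UtProd q t K * qConv q (fun k ↦ q ^ k ^ 2 *
        shiftWeight q ψ k (K (Fin.last t)) (chainShift t K)) N := fun K hK ↦ by
    have one_le (i) : 1 ≤ K i := (mem_Icc.1 (Fintype.mem_piFinset.1 hK i)).1
    rw [← sum_qBinom_mul_shiftWeight hq ψ _ (one_le _) hN, mul_sum]
    refine sum_congr rfl fun k _ ↦ ?_
    rw [UtProd_snoc q t k one_le, mul_assoc]
  rw [chainSum, sum_piFinset_snoc]
  simp only [Fin.snoc_last, chainShift_snoc]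
  rw [sum_congr rfl sum_last]
  simp only [qConv, chainSum, mul_sum, sum_div]
  rw [sum_comm]
  refine sum_congr rfl fun p _ ↦ sum_congr rfl fun K _ ↦ ?_
  ring

/-- The entries `α` of the Bailey pair relative to `1` whose other entries `β` are `q` times the
values of `chainSum q t` at `baileySum q 1 (unitAlpha q s)`. -/
noncomputable def chainAlpha (q : ℂ) (s t n : ℕ) : ℂ :=
  q ^ ((t + 1) * n ^ 2) * ((1 - q ^ (2 * n)) * q ^ (n ^ 2 - n) *
    ∑ m ∈ range n, unitAlpha q (s + t + 2) m)

theorem chainAlpha_succ (q : ℂ) (s t n : ℕ) :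
    chainAlpha q s (t + 1) n = q ^ n ^ 2 * chainAlpha q (s + 1) t n := by
  rw [chainAlpha, chainAlpha, show s + (t + 1) + 2 = s + 1 + t + 2 by ring]
  ring

theorem shiftWeight_baileySum_unitAlpha (hq₀ : q ≠ 0) (hq : ¬IsOfFinOrder q) (s k : ℕ) :
    shiftWeight q (baileySum q 1 (unitAlpha q s)) k 1 0 =
      baileySum q 0 (fun n ↦ (1 - q ^ (2 * n)) * q ^ (n ^ 2 - n) *
        ∑ m ∈ range n, unitAlpha q (s + 1) m) k := by
  rcases k with _ | k
  · simp [shiftWeight, baileySum]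
  · rw [← baileySum_one_eq_baileySum_zero_succ hq, add_comm k, shiftWeight_add_left, pow_zero,
      one_pow, one_mul]
    simp only [pow_mul_unitAlpha_succ hq₀]

theorem mul_chainSum_baileySum_unitAlpha (hq₀ : q ≠ 0) (hq : ¬IsOfFinOrder q) (s t : ℕ)
    {N M : ℕ} (hN : N ≤ M) :
    q * chainSum q t M (baileySum q 1 (unitAlpha q s)) N =
      baileySum q 0 (chainAlpha q s t) N := by
  have unit_step (s : ℕ) : baileySum q 1 (unitAlpha q s) =
      qConv q fun i ↦ q ^ (i ^ 2 + i) * baileySum q 1 (unitAlpha q (s + 1)) i :=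
    funext fun i ↦ (qConv_pow_mul_baileySum_unitAlpha_succ hq₀ hq s i).symm
  have bailey_step (α : ℕ → ℂ) (N : ℕ) : qConv q (fun k ↦ q ^ k ^ 2 * baileySum q 0 α k) N =
      baileySum q 0 (fun n ↦ q ^ n ^ 2 * α n) N := by
    simpa only [zero_mul, add_zero] using qConv_pow_mul_baileySum hq 0 α N
  induction t generalizing s N with
  | zero =>
    rw [unit_step, chainSum_zero hq _ hN]
    simp only [shiftWeight_baileySum_unitAlpha hq₀ hq, bailey_step]
    refine congrArg (baileySum q 0 · N) (funext fun n ↦ ?_)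
    rw [chainAlpha, zero_add, one_mul, add_zero]
  | succ t ih =>
    calc q * chainSum q (t + 1) M (baileySum q 1 (unitAlpha q s)) N
        = qConv q (fun k ↦ q ^ k ^ 2 *
            (q * chainSum q t M (baileySum q 1 (unitAlpha q (s + 1))) k)) N := by
          rw [unit_step, chainSum_succ hq t _ hN, qConv, qConv, mul_sum]
          refine sum_congr rfl fun p _ ↦ ?_
          ring
      _ = qConv q (fun k ↦ q ^ k ^ 2 * baileySum q 0 (chainAlpha q (s + 1) t) k) N :=
          sum_congr rfl fun p hp ↦ by
            simp only [ih (s + 1) ((HasAntidiagonal.antidiagonal.fst_le hp).trans hN)]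
      _ = baileySum q 0 (chainAlpha q s (t + 1)) N := by
          simp only [bailey_step, ← chainAlpha_succ]

theorem mul_sum_UtProd (hq₀ : q ≠ 0) (hq : ¬IsOfFinOrder q) (t N : ℕ) :
    q * ∑ K ∈ Fintype.piFinset (fun _ : Fin (t + 1) ↦ Icc 1 N) with K (Fin.last t) = N,
      UtProd q t K = baileySum q 0 (chainAlpha q 0 t) N := by
  rw [← mul_chainSum_baileySum_unitAlpha hq₀ hq 0 t le_rfl, sum_filter, chainSum]
  refine congrArg _ (sum_congr rfl fun K hK ↦ ?_)
  have le_N : K (Fin.last t) ≤ N := (mem_Icc.1 (Fintype.mem_piFinset.1 hK _)).2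
  rw [shiftWeight, if_pos le_N, baileySum_unitAlpha_zero hq]
  rcases le_N.eq_or_lt with h | h
  · simp [h]
  · simp [h.ne, Nat.sub_ne_zero_of_lt h]

end ChainSum

open Filter Topology

section Limits

variable {q : ℂ}

theorem not_isOfFinOrder_of_norm_lt_one (hq : ‖q‖ < 1) : ¬IsOfFinOrder q :=
  fun h ↦ hq.ne h.norm_eq_one

theorem summable_norm_neg_mul_pow (hq : ‖q‖ < 1) (a : ℂ) : Summable fun j : ℕ ↦ ‖-(a * q ^ j)‖ := by
  simpa only [norm_neg, norm_mul, norm_pow] using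
    (summable_geometric_of_lt_one (norm_nonneg q) hq).mul_left ‖a‖

theorem tendsto_qPoch (hq : ‖q‖ < 1) (a : ℂ) :
    Tendsto (qPoch q a) atTop (𝓝 (qPochInf q a)) := by
  have h := multipliable_one_add_of_summable (summable_norm_neg_mul_pow hq a)
  simp only [← sub_eq_add_neg] at h
  exact h.hasProd.tendsto_prod_nat

theorem qPochInf_self_ne_zero (hq : ‖q‖ < 1) : qPochInf q q ≠ 0 := by
  have h (j : ℕ) : 1 + -(q * q ^ j) ≠ 0 := by
    rw [← sub_eq_add_neg, ← pow_succ']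
    exact one_sub_pow_succ_ne_zero (not_isOfFinOrder_of_norm_lt_one hq) j
  simpa only [qPochInf, sub_eq_add_neg] using
    tprod_one_add_ne_zero_of_summable h (summable_norm_neg_mul_pow hq q)

theorem exists_norm_qPoch_le (hq : ‖q‖ < 1) (a : ℂ) : ∃ C > 0, ∀ n, ‖qPoch q a n‖ ≤ C := by
  simpa only [Set.forall_mem_range] using
    (Metric.isBounded_range_of_tendsto _ (tendsto_qPoch hq a)).exists_pos_norm_le

theorem exists_norm_inv_qPoch_self_le (hq : ‖q‖ < 1) : ∃ C > 0, ∀ n, ‖(qPoch q q n)⁻¹‖ ≤ C := by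
  simpa only [Set.forall_mem_range] using (Metric.isBounded_range_of_tendsto _
    ((tendsto_qPoch hq q).inv₀ (qPochInf_self_ne_zero hq))).exists_pos_norm_le

theorem exists_norm_qBinom_le (hq : ‖q‖ < 1) : ∃ C > 0, ∀ n k, ‖qBinom q n k‖ ≤ C := by
  obtain ⟨B, hB₀, hB⟩ := exists_norm_qPoch_le hq q
  obtain ⟨D, hD₀, hD⟩ := exists_norm_inv_qPoch_self_le hq
  refine ⟨B * D * D, by positivity, fun n k ↦ ?_⟩
  rcases lt_or_ge k 0 with hk | hk
  · rw [qBinom_eq_zero_of_neg q n hk, norm_zero]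
    positivity
  rcases lt_or_ge n k with hn | hn
  · rw [qBinom, if_neg fun h ↦ hn.not_ge h.2, norm_zero]
    positivity
  obtain ⟨m, rfl⟩ := Int.eq_ofNat_of_zero_le hk
  obtain ⟨a, ha⟩ := Int.eq_ofNat_of_zero_le (sub_nonneg.2 hn)
  have split : qPoch q q (a + m) = qPoch q q a * qPoch q (q ^ (a + 1)) m := by
    rw [qPoch, prod_range_add]
    refine congrArg _ (prod_congr rfl fun j _ ↦ ?_)
    ring
  have eq_factorials :
      qBinom q n m = qPoch q q (a + m) * (qPoch q q a)⁻¹ * (qPoch q q m)⁻¹ := by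
    have := qPoch_self_ne_zero (not_isOfFinOrder_of_norm_lt_one hq) a
    rw [show n = m + a by omega, qBinom_add_natCast, split]
    field_simp
  rw [eq_factorials, norm_mul, norm_mul]
  gcongr
  exacts [hB _, hD _, hD _]

theorem tendsto_baileySum (hq : ‖q‖ < 1) (c : ℕ) {α : ℕ → ℂ} (hα : Summable α) :
    Tendsto (baileySum q c α) atTop (𝓝 ((∑' n, α n) / qPochInf q q ^ 2)) := by
  obtain ⟨D, hD₀, hD⟩ := exists_norm_inv_qPoch_self_le hq
  have lim := tendsto_qPoch hq q
  have ne_zero := qPochInf_self_ne_zero hq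
  have as_tsum (N : ℕ) : baileySum q c α N = ∑' n, if n ∈ range (N + 1) then
      α n / (qPoch q q (N - n) * qPoch q q (N + n + c)) else 0 := by
    rw [tsum_eq_sum (s := range (N + 1)) fun n hn ↦ if_neg hn, baileySum]
    exact sum_congr rfl fun n hn ↦ (if_pos hn).symm
  rw [funext as_tsum, ← tsum_div_const, sq]
  refine tendsto_tsum_of_dominated_convergence (hα.norm.mul_right (D * D)) (fun n ↦ ?_)
    (Eventually.of_forall fun N n ↦ ?_)
  · have h : Tendsto (fun N ↦ α n / (qPoch q q (N - n) * qPoch q q (N + n + c))) atTop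
        (𝓝 (α n / (qPochInf q q * qPochInf q q))) :=
      tendsto_const_nhds.div ((lim.comp (tendsto_sub_atTop_nat n)).mul (lim.comp
        ((tendsto_add_atTop_nat c).comp (tendsto_add_atTop_nat n)))) (mul_ne_zero ne_zero ne_zero)
    refine h.congr' ?_
    filter_upwards [eventually_ge_atTop n] with N hN
    rw [if_pos (mem_range_succ_iff.2 hN)]
  · split_ifs
    · rw [div_eq_mul_inv, mul_inv, norm_mul, norm_mul]
      gcongr
      exacts [hD _, hD _]
    · rw [norm_zero]
      positivity

end Limits

section MultiSum

variable {q : ℂ}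

theorem summable_prod_pow {r : ℝ} (hr₀ : 0 ≤ r) (hr : r < 1) (n : ℕ) :
    Summable fun K : Fin n → ℕ ↦ ∏ i, r ^ K i := by
  induction n with
  | zero => exact .of_finite
  | succ n ih =>
    rw [← (Fin.consEquiv fun _ : Fin (n + 1) ↦ ℕ).summable_iff]
    refine ((summable_geometric_of_lt_one hr₀ hr).mul_of_nonneg ih (fun _ ↦ by positivity)
      fun K ↦ by positivity).congr fun p ↦ ?_
    simp [Fin.consEquiv, Fin.prod_univ_succ]

theorem exists_norm_UtProd_le (hq : ‖q‖ < 1) (t : ℕ) :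
    ∃ C > 0, ∀ K, ‖UtProd q t K‖ ≤ C * ∏ i : Fin t, ‖q‖ ^ K i.castSucc := by
  obtain ⟨C, hC₀, hC⟩ := exists_norm_qBinom_le hq
  refine ⟨C ^ t, by positivity, fun K ↦ ?_⟩
  calc ‖UtProd q t K‖ ≤ ∏ i : Fin t, C * ‖q‖ ^ K i.castSucc := by
        rw [UtProd, norm_prod]
        refine prod_le_prod (fun i _ ↦ norm_nonneg _) fun i _ ↦ ?_
        rw [norm_mul, norm_pow, mul_comm]
        gcongr ?_ * ?_
        exacts [hC _ _, pow_le_pow_of_le_one (norm_nonneg q) hq.le (Nat.le_self_pow two_ne_zero _)]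
    _ = C ^ t * ∏ i : Fin t, ‖q‖ ^ K i.castSucc := by
        rw [prod_mul_distrib, prod_const, card_univ, Fintype.card_fin]

theorem summable_norm_UtTerm (hq : ‖q‖ < 1) (x : ℂ) (t : ℕ) :
    Summable fun K ↦ ‖UtTerm q x t K‖ := by
  obtain ⟨A, hA₀, hA⟩ := exists_norm_qPoch_le hq (x * q)
  obtain ⟨B, hB₀, hB⟩ := exists_norm_qPoch_le hq (q / x)
  obtain ⟨C, -, hC⟩ := exists_norm_UtProd_le hq t
  refine .of_nonneg_of_le (fun _ ↦ norm_nonneg _) (fun K ↦ ?_)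
    ((summable_prod_pow (norm_nonneg q) hq (t + 1)).mul_left (A * B * C))
  calc ‖UtTerm q x t K‖
      ≤ A * B * ‖q‖ ^ K (Fin.last t) * (C * ∏ i : Fin t, ‖q‖ ^ K i.castSucc) := by
        rw [UtTerm, norm_mul, norm_mul, norm_mul, norm_pow]
        gcongr
        exacts [hA _, hB _, hC _]
    _ = A * B * C * ∏ i, ‖q‖ ^ K i := by
        rw [Fin.prod_univ_castSucc]
        ring

theorem UtProd_eq_zero {t : ℕ} {K : Fin (t + 1) → ℕ} {i : Fin t} (h : K i.succ < K i.castSucc) :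
    UtProd q t K = 0 :=
  prod_eq_zero (mem_univ i) (by rw [qBinom_eq_zero_of_neg q _ (by omega), mul_zero])

theorem tsum_indicator_UtTerm_last_eq (x : ℂ) (t N : ℕ) :
    ∑' K : (fun K : Fin (t + 1) → ℕ ↦ K (Fin.last t)) ⁻¹' {N},
        {K : Fin (t + 1) → ℕ | (∀ i : Fin t, K i.castSucc ≤ K i.succ) ∧ 1 ≤ K 0}.indicator
          (UtTerm q x t) K =
      qPoch q (x * q) (N - 1) * qPoch q (q / x) (N - 1) * q ^ N *
        ∑ K ∈ Fintype.piFinset (fun _ : Fin (t + 1) ↦ Icc 1 N) with K (Fin.last t) = N,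
          UtProd q t K := by
  set S := {K : Fin (t + 1) → ℕ | (∀ i : Fin t, K i.castSucc ≤ K i.succ) ∧ 1 ≤ K 0}
  rw [_root_.tsum_subtype _ (S.indicator (UtTerm q x t)), Set.indicator_indicator, tsum_eq_sum,
    mul_sum]
  · refine sum_congr rfl fun K hK ↦ ?_
    obtain ⟨hK, last_eq⟩ := mem_filter.1 hK
    by_cases hKS : ∀ i : Fin t, K i.castSucc ≤ K i.succ
    · have mem_S : K ∈ S := ⟨hKS, (mem_Icc.1 (Fintype.mem_piFinset.1 hK 0)).1⟩
      rw [Set.indicator_of_mem (Set.mem_inter (Set.mem_preimage.2 last_eq) mem_S), UtTerm, last_eq]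
    · rw [Set.indicator_of_notMem fun h ↦ hKS h.2.1]
      push Not at hKS
      obtain ⟨i, hi⟩ := hKS
      rw [UtProd_eq_zero hi, mul_zero]
  · refine fun K hK ↦ Set.indicator_of_notMem (fun h ↦ hK ?_) _
    obtain ⟨last_eq, mono, one_le⟩ := h
    have mono : Monotone K := Fin.monotone_iff_le_succ.2 mono
    refine mem_filter.2 ⟨Fintype.mem_piFinset.2 fun i ↦ mem_Icc.2 ⟨?_, ?_⟩, last_eq⟩
    exacts [one_le.trans (mono i.zero_le), (mono i.le_last).trans_eq last_eq]

theorem hasSum_mul_baileySum_chainAlpha (hq₀ : q ≠ 0) (hq : ‖q‖ < 1) (x : ℂ) (t : ℕ) :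
    HasSum (fun N ↦ qPoch q (x * q) (N - 1) * qPoch q (q / x) (N - 1) * q ^ N *
        baileySum q 0 (chainAlpha q 0 t) N)
      (q * ∑' K : {K : Fin (t + 1) → ℕ // (∀ i : Fin t, K i.castSucc ≤ K i.succ) ∧ 1 ≤ K 0},
        UtTerm q x t K) := by
  set S := {K : Fin (t + 1) → ℕ | (∀ i : Fin t, K i.castSucc ≤ K i.succ) ∧ 1 ≤ K 0}
  have h := ((summable_norm_UtTerm hq x t).of_norm.indicator S).hasSum.tsum_fiberwise
    fun K ↦ K (Fin.last t)
  rw [← _root_.tsum_subtype S] at h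
  refine (h.mul_left q).congr_fun ?_
  intro N
  rw [tsum_indicator_UtTerm_last_eq, mul_left_comm,
    mul_sum_UtProd hq₀ (not_isOfFinOrder_of_norm_lt_one hq)]

theorem mul_tsum_UtTerm {x : ℂ} (hq₀ : q ≠ 0) (hq : ‖q‖ < 1) (hx : x ≠ 0)
    (hx₁ : ∀ n : ℕ, x * q ^ (n + 1) ≠ 1) (hx₂ : ∀ n : ℕ, q ^ (n + 1) / x ≠ 1) (t : ℕ)
    (hα : Summable fun n ↦ chainAlpha q 0 t n * q ^ n / ((1 - x * q ^ n) * (1 - q ^ n / x))) :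
    q * ∑' K : {K : Fin (t + 1) → ℕ // (∀ i : Fin t, K i.castSucc ≤ K i.succ) ∧ 1 ≤ K 0},
        UtTerm q x t K =
      qPochInf q (x * q) * qPochInf q (q / x) / qPochInf q q ^ 2 *
        ∑' n, chainAlpha q 0 t n * q ^ n / ((1 - x * q ^ n) * (1 - q ^ n / x)) := by
  have alpha_zero : chainAlpha q 0 t 0 = 0 := by
    rw [chainAlpha, range_zero, sum_empty, mul_zero, mul_zero]
  have h := (hasSum_mul_baileySum_chainAlpha hq₀ hq x t).tendsto_sum_nat.comp
    (tendsto_add_atTop_nat 1)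
  refine tendsto_nhds_unique (h.congr fun J ↦ ?_) ((((tendsto_qPoch hq (x * q)).mul
    (tendsto_qPoch hq (q / x))).mul (tendsto_baileySum hq 0 hα)).trans_eq ?_)
  · have := sum_range_qPoch_mul_baileySum (not_isOfFinOrder_of_norm_lt_one hq) hx hx₁ hx₂
      alpha_zero J
    simpa [sum_range_succ', baileySum, alpha_zero] using this
  · ring_nf

end MultiSum

section Hecke

variable {q x : ℂ}

theorem sum_Ico_neg_eq_sum_range {R : Type*} [AddCommMonoid R] (f : ℤ → R) (n : ℕ) :
    ∑ m ∈ Ico (-(n : ℤ)) n, f m = ∑ m ∈ range n, (f m + f (-1 - m)) := by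
  induction n with
  | zero => simp
  | succ n ih =>
    rw [Nat.cast_add_one, Ico_succ_succ, sum_union (by simp), sum_pair (by omega), ih,
      sum_range_succ, add_comm (f (-(n + 1))), neg_add']
    ring_nf

/-- The exponent of `q` in `heckeTerm q x T (ν + m, ν - 1 - m)`. -/
def heckeExponent (T ν m : ℤ) : ℤ := (T + 1) * ν ^ 2 - T + m - (2 * T + 1) * (m * (m + 1) / 2)

theorem two_mul_heckeExponent (T ν m : ℤ) :
    2 * heckeExponent T ν m =
      2 * (T + 1) * ν ^ 2 - 2 * T + 2 * m - (2 * T + 1) * (m * (m + 1)) := by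
  have h := Int.mul_ediv_cancel' (Int.even_mul_succ_self m).two_dvd
  rw [heckeExponent]
  linear_combination -(2 * T + 1) * h

theorem sub_one_le_heckeExponent {T ν m : ℤ} (hT : 1 ≤ T) (hν : 1 ≤ ν) (hm : -ν ≤ m)
    (hm' : m < ν) : ν - 1 ≤ heckeExponent T ν m := by
  have h₁ : 0 ≤ (2 * T + 1) * ((m + ν) * (ν - 1 - m)) :=
    mul_nonneg (by omega) (mul_nonneg (by omega) (by omega))
  have h₂ : 0 ≤ (ν - 1) * (ν + 2 * T - 2) := mul_nonneg (by omega) (by omega)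
  have := two_mul_heckeExponent T ν m
  nlinarith

theorem heckeTerm_add_sub (q x : ℂ) (T ν m : ℤ) :
    heckeTerm q x T (ν + m, ν - 1 - m) =
      (-1) ^ m * q ^ heckeExponent T ν m * (1 - x * q ^ ν)⁻¹ := by
  rw [heckeTerm, div_eq_mul_inv, show (ν + m - (ν - 1 - m) - 1) / 2 = m by omega,
    show (ν + m + (ν - 1 - m) + 1) / 2 = ν by omega]
  congr 3
  refine Int.ediv_eq_of_eq_mul_left (by norm_num) ?_
  linear_combination -4 * two_mul_heckeExponent T ν m

/-- The sum of the numerators of the Hecke-type terms with `(r + s + 1) / 2 = n`, which are also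
those with `(r + s + 1) / 2 = -n` in the opposite quadrant. -/
noncomputable def heckeShell (q : ℂ) (T : ℤ) (n : ℕ) : ℂ :=
  ∑ m ∈ Ico (-(n : ℤ)) n, (-1) ^ m * q ^ heckeExponent T n m

theorem pow_mul_heckeExponent_pair (hq₀ : q ≠ 0) (t n m : ℕ) :
    q ^ (t + 2) * ((-1) ^ (m : ℤ) * q ^ heckeExponent (t + 1) n m +
        (-1) ^ (-1 - m : ℤ) * q ^ heckeExponent (t + 1) n (-1 - m)) =
      -(q ^ ((t + 2) * n ^ 2) * unitAlpha q (t + 2) m) := by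
  have neg_one_zpow : (-1 : ℂ) ^ (-1 - m : ℤ) = -(-1) ^ m := by
    rw [zpow_sub₀ (by norm_num), zpow_natCast, zpow_neg_one]
    rcases neg_one_pow_eq_or ℂ m with h | h <;> norm_num [h]
  have h₁ := two_mul_heckeExponent (t + 1) n m
  have h₂ := two_mul_heckeExponent (t + 1) n (-1 - m)
  have h₃ : 2 * (m.choose 2 : ℤ) = m * (m - 1) := by
    have : 2 * (m.choose 2 : ℚ) = m * (m - 1) := by rw [Nat.cast_choose_two]; ring
    exact_mod_cast this
  have reflect : heckeExponent (t + 1) n m =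
      heckeExponent (t + 1) n (-1 - m) + (2 * m + 1 : ℕ) := by
    push_cast
    linarith
  have exponent : ((t + 2 : ℕ) : ℤ) + heckeExponent (t + 1) n (-1 - m) =
      ((t + 2) * n ^ 2 : ℕ) + ((m.choose 2 : ℤ) - (t + 2 : ℕ) * (m * (m + 1))) := by
    push_cast
    linarith
  have h := congrArg (q ^ ·) exponent
  simp only [zpow_add₀ hq₀, zpow_natCast] at h
  rw [neg_one_zpow, reflect, zpow_add₀ hq₀, zpow_natCast, zpow_natCast, unitAlpha]
  linear_combination (-1) ^ m * (q ^ (2 * m + 1) - 1) * h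

theorem pow_mul_heckeShell (hq₀ : q ≠ 0) (t n : ℕ) :
    q ^ (t + 2) * heckeShell q (t + 1) n =
      -(q ^ ((t + 2) * n ^ 2) * ∑ m ∈ range n, unitAlpha q (t + 2) m) := by
  rw [heckeShell, sum_Ico_neg_eq_sum_range, mul_sum, mul_sum, ← sum_neg_distrib]
  exact sum_congr rfl fun m _ ↦ pow_mul_heckeExponent_pair hq₀ t n m

theorem chainAlpha_mul_pow_div (hq₀ : q ≠ 0) (hx : x ≠ 0) (t : ℕ) {n : ℕ}
    (hx₁ : x * q ^ n ≠ 1) (hx₂ : q ^ n / x ≠ 1) :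
    chainAlpha q 0 t n * q ^ n / ((1 - x * q ^ n) * (1 - q ^ n / x)) =
      -(q ^ (t + 2) * (heckeShell q (t + 1) n * (1 - x * q ^ (n : ℤ))⁻¹ -
        heckeShell q (t + 1) n * (1 - x * q ^ (-n : ℤ))⁻¹)) := by
  have h₁ : 1 - q ^ n * x ≠ 0 := sub_ne_zero.2 (mul_comm x _ ▸ hx₁.symm)
  have h₂ : q ^ n - x ≠ 0 := fun h ↦ hx₂ ((div_eq_one_iff_eq hx).2 (sub_eq_zero.1 h))
  have h₃ : q ^ (n ^ 2 - n) * q ^ n = q ^ n ^ 2 := by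
    rw [← pow_add, Nat.sub_add_cancel (Nat.le_self_pow two_ne_zero n)]
  rw [← mul_sub, ← mul_assoc, pow_mul_heckeShell hq₀, chainAlpha, zero_add, zpow_neg, zpow_natCast,
    show (t + 2) * n ^ 2 = (t + 1) * n ^ 2 + n ^ 2 by ring, pow_add, ← h₃, pow_mul' q 2]
  generalize ∑ m ∈ range n, unitAlpha q (t + 2) m = S
  have h₄ : q ^ n ≠ 0 := pow_ne_zero n hq₀
  generalize q ^ n = y at *
  rw [show 1 - y / x = -((y - x) / x) by field_simp; ring,
    show 1 - x * y⁻¹ = (y - x) / y by field_simp, mul_comm x y]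
  field_simp
  ring

/-- Indices for the terms of either half of the Hecke-type sum: the entry `n` determines the
denominator, with exponent `±(n + 1)`, and the entry `m` runs through the corresponding shell. -/
abbrev HeckeIndex : Type := Σ n : ℕ, Ico (-((n + 1 : ℕ) : ℤ)) (n + 1 : ℕ)

/-- The pair `(r, s)` with `(r + s + 1) / 2 = ε * (n + 1)` and `(r - s - 1) / 2 = m`. For `ε = 1`
these are the pairs of nonnegative integers of opposite parity, for `ε = -1` those of negative ones.
-/
def heckePoint (ε : ℤ) (p : HeckeIndex) : ℤ × ℤ :=
  (ε * (p.1 + 1 : ℕ) + p.2, ε * (p.1 + 1 : ℕ) - 1 - p.2)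

theorem heckePoint_injective {ε : ℤ} (hε : ε ≠ 0) : Function.Injective (heckePoint ε) := by
  rintro ⟨n, m, hm⟩ ⟨n', m', hm'⟩ h
  obtain ⟨h₁, h₂⟩ := Prod.mk.inj h
  have : ε * ((n + 1 : ℕ) : ℤ) = ε * (n' + 1 : ℕ) := by dsimp only at h₁ h₂; linarith
  obtain rfl : n = n' := by have := mul_left_cancel₀ hε this; omega
  obtain rfl : m = m' := by dsimp only at h₁; linarith
  rfl

theorem range_heckePoint_one :
    Set.range (heckePoint 1) = {p | (0 ≤ p.1 ∧ 0 ≤ p.2) ∧ p.1 % 2 ≠ p.2 % 2} := by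
  ext ⟨r, s⟩
  change _ ↔ (0 ≤ r ∧ 0 ≤ s) ∧ r % 2 ≠ s % 2
  constructor
  · rintro ⟨⟨n, m, hm⟩, h⟩
    obtain ⟨h₁ : 1 * ((n + 1 : ℕ) : ℤ) + m = r, h₂ : 1 * ((n + 1 : ℕ) : ℤ) - 1 - m = s⟩ :=
      Prod.mk.inj h
    rw [mem_Ico] at hm
    omega
  · intro h
    refine ⟨⟨((r + s - 1) / 2).toNat, (r - s - 1) / 2, mem_Ico.2 ?_⟩, Prod.ext ?_ ?_⟩
    · omega
    all_goals
      dsimp only [heckePoint]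
      omega

theorem range_heckePoint_neg_one :
    Set.range (heckePoint (-1)) = {p | (p.1 < 0 ∧ p.2 < 0) ∧ p.1 % 2 ≠ p.2 % 2} := by
  ext ⟨r, s⟩
  change _ ↔ (r < 0 ∧ s < 0) ∧ r % 2 ≠ s % 2
  constructor
  · rintro ⟨⟨n, m, hm⟩, h⟩
    obtain ⟨h₁ : -1 * ((n + 1 : ℕ) : ℤ) + m = r, h₂ : -1 * ((n + 1 : ℕ) : ℤ) - 1 - m = s⟩ :=
      Prod.mk.inj h
    rw [mem_Ico] at hm
    omega
  · intro h
    refine ⟨⟨((-r - s - 3) / 2).toNat, (r - s - 1) / 2, mem_Ico.2 ?_⟩, Prod.ext ?_ ?_⟩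
    · omega
    all_goals
      dsimp only [heckePoint]
      omega

theorem heckeTerm_heckePoint (q x : ℂ) (T : ℤ) {ε : ℤ} (hε : ε ^ 2 = 1) (p : HeckeIndex) :
    heckeTerm q x T (heckePoint ε p) =
      (-1) ^ (p.2 : ℤ) * q ^ heckeExponent T (p.1 + 1 : ℕ) p.2 *
        (1 - x * q ^ (ε * (p.1 + 1 : ℕ)))⁻¹ := by
  rw [heckePoint, heckeTerm_add_sub, heckeExponent, heckeExponent, mul_pow, hε, one_mul]

theorem summable_norm_heckePoint (hq₀ : q ≠ 0) (hq : ‖q‖ < 1) {T : ℤ} (hT : 1 ≤ T) {ε : ℤ}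
    (hε : ε ^ 2 = 1) {C : ℝ} (hC : ∀ n : ℕ, ‖(1 - x * q ^ (ε * (n + 1 : ℕ)))⁻¹‖ ≤ C) :
    Summable fun p ↦ ‖heckeTerm q x T (heckePoint ε p)‖ := by
  have norm_le (n : ℕ) (m : Ico (-((n + 1 : ℕ) : ℤ)) (n + 1 : ℕ)) :
      ‖heckeTerm q x T (heckePoint ε ⟨n, m⟩)‖ ≤ ‖q‖ ^ n * C := by
    obtain ⟨h₁, h₂⟩ := mem_Ico.1 m.2
    have := sub_one_le_heckeExponent hT (by omega) h₁ h₂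
    rw [heckeTerm_heckePoint q x T hε, norm_mul, norm_mul, norm_zpow, norm_neg, norm_one, one_zpow,
      one_mul, norm_zpow, ← zpow_natCast]
    gcongr ?_ * ?_
    · exact zpow_le_zpow_right_of_le_one₀ (norm_pos_iff.2 hq₀) hq.le (by push_cast at this ⊢; omega)
    · exact hC n
  rw [summable_sigma_of_nonneg fun _ ↦ norm_nonneg _]
  refine ⟨fun n ↦ .of_finite, .of_nonneg_of_le (fun n ↦ tsum_nonneg fun _ ↦ norm_nonneg _)
    (fun n ↦ ?_) (((summable_pow_mul_geometric_of_norm_lt_one (r := ‖q‖) 1 (by simpa using hq)).add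
      (summable_geometric_of_lt_one (norm_nonneg q) hq)).mul_left (2 * C))⟩
  calc _ ≤ ∑ _ : Ico (-((n + 1 : ℕ) : ℤ)) (n + 1 : ℕ), ‖q‖ ^ n * C := by
        rw [tsum_fintype]
        exact sum_le_sum fun m _ ↦ norm_le n m
    _ = _ := by
        have card_eq : (((n + 1 : ℕ) : ℤ) - -(n + 1 : ℕ)).toNat = 2 * (n + 1) := by omega
        rw [sum_const, card_univ, Fintype.card_coe, Int.card_Ico, card_eq, nsmul_eq_mul]
        push_cast
        ring

theorem summable_norm_heckeTerm_range (hq₀ : q ≠ 0) (hq : ‖q‖ < 1) {T : ℤ} (hT : 1 ≤ T) {ε : ℤ}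
    (hε : ε ^ 2 = 1) (hC : ∃ C, ∀ n : ℕ, ‖(1 - x * q ^ (ε * (n + 1 : ℕ)))⁻¹‖ ≤ C) :
    Summable fun p : Set.range (heckePoint ε) ↦ ‖heckeTerm q x T p‖ := by
  have ε_ne_zero : ε ≠ 0 := fun h ↦ by simp [h] at hε
  obtain ⟨C, hC⟩ := hC
  exact (Equiv.ofInjective _ (heckePoint_injective ε_ne_zero)).summable_iff.1
    (summable_norm_heckePoint hq₀ hq hT hε hC)

theorem hasSum_heckeShell (hq₀ : q ≠ 0) (hq : ‖q‖ < 1) {T : ℤ} (hT : 1 ≤ T) {ε : ℤ}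
    (hε : ε ^ 2 = 1) (hC : ∃ C, ∀ n : ℕ, ‖(1 - x * q ^ (ε * (n + 1 : ℕ)))⁻¹‖ ≤ C) :
    HasSum (fun n ↦ heckeShell q T (n + 1) * (1 - x * q ^ (ε * (n + 1 : ℕ)))⁻¹)
      (∑' p : Set.range (heckePoint ε), heckeTerm q x T p) := by
  have ε_ne_zero : ε ≠ 0 := fun h ↦ by simp [h] at hε
  have h := (Equiv.ofInjective _ (heckePoint_injective ε_ne_zero)).hasSum_iff.2
    (summable_norm_heckeTerm_range hq₀ hq hT hε hC).of_norm.hasSum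
  refine HasSum.sigma h fun n ↦ ?_
  rw [heckeShell, sum_mul, ← Finset.sum_coe_sort]
  convert hasSum_fintype _ using 2 with m
  exact (heckeTerm_heckePoint q x T hε ⟨n, m⟩).symm

theorem exists_norm_inv_one_sub_mul_zpow_le (hq : ‖q‖ < 1) (x : ℂ) :
    ∃ C, ∀ n : ℕ, ‖(1 - x * q ^ (1 * ((n + 1 : ℕ) : ℤ)))⁻¹‖ ≤ C := by
  have lim : Tendsto (fun n : ℕ ↦ (1 - x * q ^ (n + 1))⁻¹) atTop (𝓝 (1 - x * 0)⁻¹) :=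
    ((((tendsto_pow_atTop_nhds_zero_of_norm_lt_one hq).comp
      (tendsto_add_atTop_nat 1)).const_mul x).const_sub 1).inv₀ (by simp)
  obtain ⟨C, -, hC⟩ := (Metric.isBounded_range_of_tendsto _ lim).exists_pos_norm_le
  refine ⟨C, fun n ↦ ?_⟩
  rw [one_mul, zpow_natCast]
  exact hC _ ⟨n, rfl⟩

theorem exists_norm_inv_one_sub_mul_zpow_neg_le (hq₀ : q ≠ 0) (hq : ‖q‖ < 1) (hx : x ≠ 0) :
    ∃ C, ∀ n : ℕ, ‖(1 - x * q ^ (-1 * ((n + 1 : ℕ) : ℤ)))⁻¹‖ ≤ C := by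
  have pow_lim : Tendsto (fun n : ℕ ↦ q ^ (n + 1)) atTop (𝓝 0) :=
    (tendsto_pow_atTop_nhds_zero_of_norm_lt_one hq).comp (tendsto_add_atTop_nat 1)
  have lim : Tendsto (fun n : ℕ ↦ q ^ (n + 1) / (q ^ (n + 1) - x)) atTop (𝓝 (0 / (0 - x))) :=
    pow_lim.div (pow_lim.sub_const x) (by simpa using hx)
  obtain ⟨C, -, hC⟩ := (Metric.isBounded_range_of_tendsto _ lim).exists_pos_norm_le
  refine ⟨C, fun n ↦ ?_⟩
  have ne_zero : q ^ (n + 1) ≠ 0 := pow_ne_zero _ hq₀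
  have eq_div : 1 - x * (q ^ (n + 1))⁻¹ = (q ^ (n + 1) - x) / q ^ (n + 1) := by field_simp
  rw [neg_one_mul, zpow_neg, zpow_natCast, eq_div, inv_div]
  exact hC _ ⟨n, rfl⟩

theorem hasSum_chainAlpha (hq₀ : q ≠ 0) (hq : ‖q‖ < 1) (hx : x ≠ 0)
    (hx₁ : ∀ n : ℕ, x * q ^ (n + 1) ≠ 1) (hx₂ : ∀ n : ℕ, q ^ (n + 1) / x ≠ 1) (t : ℕ) :
    HasSum (fun n ↦ chainAlpha q 0 t n * q ^ n / ((1 - x * q ^ n) * (1 - q ^ n / x)))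
      (-(q ^ (t + 2) * (∑' p : Set.range (heckePoint 1), heckeTerm q x (t + 1) p -
        ∑' p : Set.range (heckePoint (-1)), heckeTerm q x (t + 1) p))) := by
  have hT : (1 : ℤ) ≤ t + 1 := by omega
  have pos := hasSum_heckeShell hq₀ hq hT (one_pow 2)
    (exists_norm_inv_one_sub_mul_zpow_le hq x)
  have neg := hasSum_heckeShell hq₀ hq hT neg_one_sq
    (exists_norm_inv_one_sub_mul_zpow_neg_le hq₀ hq hx)
  rw [← hasSum_nat_add_iff' 1, sum_range_one, chainAlpha, range_zero, sum_empty, mul_zero, mul_zero,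
    zero_mul, zero_div, sub_zero]
  refine ((pos.sub neg).mul_left (q ^ (t + 2))).neg.congr_fun fun n ↦ ?_
  rw [chainAlpha_mul_pow_div hq₀ hx t (hx₁ n) (hx₂ n), one_mul, neg_one_mul]

end Hecke

/-- Hecke-type (Appell–Lerch style) expansion of `U_t(-x;q)`
(the paper's `t` is `t+1` here), with absolute convergence of each series. -/
theorem stmt1 (t : ℕ) (q x : ℂ) (hq0 : 0 < ‖q‖) (hq1 : ‖q‖ < 1)
    (hx : x ≠ 0) (hxq : ∀ n : ℤ, n ≠ 0 → x * q ^ n ≠ 1) :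
    Summable (fun k : {k : Fin (t+1) → ℕ //
        (∀ i : Fin t, k i.castSucc ≤ k i.succ) ∧ 1 ≤ k 0} =>
      ‖UtTerm q x t k.1‖) ∧
    Summable (fun p : {p : ℤ × ℤ // (0 ≤ p.1 ∧ 0 ≤ p.2) ∧ p.1 % 2 ≠ p.2 % 2} =>
      ‖heckeTerm q x ((t : ℤ) + 1) p.1‖) ∧
    Summable (fun p : {p : ℤ × ℤ // (p.1 < 0 ∧ p.2 < 0) ∧ p.1 % 2 ≠ p.2 % 2} =>
      ‖heckeTerm q x ((t : ℤ) + 1) p.1‖) ∧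
    q ^ (-(t : ℤ) - 1) *
      ∑' k : {k : Fin (t+1) → ℕ //
          (∀ i : Fin t, k i.castSucc ≤ k i.succ) ∧ 1 ≤ k 0},
        UtTerm q x t k.1 =
    -(qPochInf q (x * q) * qPochInf q (q / x) / (qPochInf q q) ^ 2) *
      ((∑' p : {p : ℤ × ℤ // (0 ≤ p.1 ∧ 0 ≤ p.2) ∧ p.1 % 2 ≠ p.2 % 2},
          heckeTerm q x ((t : ℤ) + 1) p.1) -
       (∑' p : {p : ℤ × ℤ // (p.1 < 0 ∧ p.2 < 0) ∧ p.1 % 2 ≠ p.2 % 2},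
          heckeTerm q x ((t : ℤ) + 1) p.1)) := by
  have hq₀ : q ≠ 0 := norm_pos_iff.1 hq0
  have hT : (1 : ℤ) ≤ t + 1 := by omega
  have hx₁ (n : ℕ) : x * q ^ (n + 1) ≠ 1 := by
    simpa only [zpow_natCast] using hxq (n + 1 : ℕ) (by omega)
  have hx₂ (n : ℕ) : q ^ (n + 1) / x ≠ 1 := fun h ↦ hxq (-(n + 1 : ℕ)) (by omega) <| by
    rw [zpow_neg, zpow_natCast, (div_eq_one_iff_eq hx).1 h, mul_inv_cancel₀ hx]
  have pos := summable_norm_heckeTerm_range hq₀ hq1 hT (one_pow 2)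
    (exists_norm_inv_one_sub_mul_zpow_le hq1 x)
  have neg := summable_norm_heckeTerm_range hq₀ hq1 hT neg_one_sq
    (exists_norm_inv_one_sub_mul_zpow_neg_le hq₀ hq1 hx)
  have hα := hasSum_chainAlpha hq₀ hq1 hx hx₁ hx₂ t
  have hU := mul_tsum_UtTerm hq₀ hq1 hx hx₁ hx₂ t hα.summable
  rw [hα.tsum_eq, range_heckePoint_one, range_heckePoint_neg_one] at hU
  rw [range_heckePoint_one] at pos
  rw [range_heckePoint_neg_one] at neg
  refine ⟨(summable_norm_UtTerm hq1 x t).subtype _, pos, neg, ?_⟩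
  have h : q ^ (-(t : ℤ) - 1) = (q ^ (t + 2))⁻¹ * q := by
    rw [← zpow_natCast, ← zpow_neg, ← zpow_add_one₀ hq₀]
    congr 1
    push_cast
    ring
  rw [h, mul_assoc, hU]
  field_simp
  rfl
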